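/- The commutator subgroup of V_n' is the cyclic subgroup generated by the scalar matrix ζ·I; in particular, the commutator subgroup of V_n' is cyclic of order n. -/

import Mathlib

open Matrix Complex

/-- `ζ = exp(2πi/n)`. -/
noncomputable def zetaC (n : ℕ) : ℂ := Complex.exp (2 * Real.pi * Complex.I / n)

/-- The cyclic permutation matrix `α'`, with `α'_{ij} = 1` iff `i ≡ j + 1 (mod n)`. -/
noncomputable def alphaM (n : ℕ) : Matrix (Fin n) (Fin n) ℂ :=
  fun i j => if (i : ℕ) = ((j : ℕ) + 1) % n then 1 else 0

/-- The diagonal matrix `β' = diag(ζ, ζ², …, ζ^{n−1}, 1)`. -/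
noncomputable def betaM (n : ℕ) : Matrix (Fin n) (Fin n) ℂ :=
  Matrix.diagonal fun i => zetaC n ^ ((i : ℕ) + 1)

/-- `α'` as an element of the unitary group. -/
noncomputable def aU (n : ℕ) (hA : alphaM n ∈ Matrix.unitaryGroup (Fin n) ℂ) :
    Matrix.unitaryGroup (Fin n) ℂ := ⟨alphaM n, hA⟩

/-- `β'` as an element of the unitary group. -/
noncomputable def bU (n : ℕ) (hB : betaM n ∈ Matrix.unitaryGroup (Fin n) ℂ) :
    Matrix.unitaryGroup (Fin n) ℂ := ⟨betaM n, hB⟩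

/-- The scalar matrix `ζ·I` as an element of the unitary group. -/
noncomputable def sU (n : ℕ)
    (hS : zetaC n • (1 : Matrix (Fin n) (Fin n) ℂ) ∈ Matrix.unitaryGroup (Fin n) ℂ) :
    Matrix.unitaryGroup (Fin n) ℂ := ⟨zetaC n • (1 : Matrix (Fin n) (Fin n) ℂ), hS⟩

/-- `V_n'`, the subgroup of `U_n` generated by `α'` and `β'`. -/
noncomputable def Vgrp (n : ℕ) (hA : alphaM n ∈ Matrix.unitaryGroup (Fin n) ℂ)
    (hB : betaM n ∈ Matrix.unitaryGroup (Fin n) ℂ) :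
    Subgroup (Matrix.unitaryGroup (Fin n) ℂ) :=
  Subgroup.closure {aU n hA, bU n hB}

/-- `W_n`, the subgroup of `U_n` generated by `β'` and the scalar matrix `ζ·I`. -/
noncomputable def Wgrp (n : ℕ) (hB : betaM n ∈ Matrix.unitaryGroup (Fin n) ℂ)
    (hS : zetaC n • (1 : Matrix (Fin n) (Fin n) ℂ) ∈ Matrix.unitaryGroup (Fin n) ℂ) :
    Subgroup (Matrix.unitaryGroup (Fin n) ℂ) :=
  Subgroup.closure {bU n hB, sU n hS}

/-!
The entrywise identity `β' α' = ζ α' β'` says that `⁅β', α'⁆ = ζ·I`, which is central. Modulo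
`⟨ζ·I⟩` the generators of `V_n'` commute, so every commutator of `V_n'` lies in `⟨ζ·I⟩`. The order
of `ζ·I` is that of `ζ`.
-/

section Group

open scoped commutatorElement

variable {G : Type*} [Group G]

theorem commutatorElement_mem_of_mem_closure_left {S : Set G} {N : Subgroup G}
    (hS : Subgroup.closure S ≤ Subgroup.normalizer N) {y : G} (h : ∀ x ∈ S, ⁅x, y⁆ ∈ N) {x : G}
    (hx : x ∈ Subgroup.closure S) : ⁅x, y⁆ ∈ N := by
  induction hx using Subgroup.closure_induction with
  | mem x hx => exact h x hx
  | one => simp only [commutatorElement_one_left, one_mem]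
  | mul x x' hx _ ihx ihx' =>
    rw [commutatorElement_mul_left_eq_conj_mul]
    exact mul_mem ((Subgroup.mem_normalizer_iff.1 (hS hx) _).1 ihx') ihx
  | inv x hx ihx =>
    rw [commutatorElement_inv_left, ← commutatorElement_inv]
    exact (Subgroup.mem_normalizer_iff''.1 (hS hx) _).1 (inv_mem ihx)

theorem commutator_closure_le {S T : Set G} {N : Subgroup G}
    (hS : Subgroup.closure S ≤ Subgroup.normalizer N)
    (hT : Subgroup.closure T ≤ Subgroup.normalizer N)
    (h : ∀ x ∈ S, ∀ y ∈ T, ⁅x, y⁆ ∈ N) :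
    ⁅Subgroup.closure S, Subgroup.closure T⁆ ≤ N := by
  refine Subgroup.commutator_le.2 fun x hx y hy =>
    commutatorElement_mem_of_mem_closure_left hS (fun s hs => ?_) hx
  rw [← inv_mem_iff, commutatorElement_inv]
  refine commutatorElement_mem_of_mem_closure_left hT (fun t ht => ?_) hy
  rw [← inv_mem_iff, commutatorElement_inv]
  exact h s hs t ht

theorem mem_normalizer_zpowers_of_commute {c g : G} (h : Commute c g) :
    g ∈ Subgroup.normalizer (Subgroup.zpowers c : Set G) := by
  refine Subgroup.centralizer_le_normalizer _ (Subgroup.mem_centralizer_iff.2 ?_)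
  rintro _ ⟨k, rfl⟩
  exact h.zpow_left k

theorem commutator_closure_pair {a b : G} (ha : Commute ⁅a, b⁆ a) (hb : Commute ⁅a, b⁆ b) :
    ⁅Subgroup.closure {a, b}, Subgroup.closure {a, b}⁆ = Subgroup.zpowers ⁅a, b⁆ := by
  have hnorm : Subgroup.closure {a, b} ≤ Subgroup.normalizer (Subgroup.zpowers ⁅a, b⁆) := by
    rw [Subgroup.closure_le, Set.pair_subset_iff]
    exact ⟨mem_normalizer_zpowers_of_commute ha, mem_normalizer_zpowers_of_commute hb⟩
  apply le_antisymm
  · apply commutator_closure_le hnorm hnorm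
    rintro x (rfl | rfl) y (rfl | rfl)
    · simp only [commutatorElement_self, one_mem]
    · exact Subgroup.mem_zpowers _
    · rw [← inv_mem_iff, commutatorElement_inv]
      exact Subgroup.mem_zpowers _
    · simp only [commutatorElement_self, one_mem]
  · rw [Subgroup.zpowers_le]
    exact Subgroup.commutator_mem_commutator (Subgroup.subset_closure (Set.mem_insert a {b}))
      (Subgroup.subset_closure (Set.mem_insert_of_mem a rfl))

end Group

section Matrix

variable {m R : Type*} [Fintype m] [DecidableEq m]

theorem diagonal_mul_eq_smul_mul_diagonal [CommSemiring R] {d : m → R} {A : Matrix m m R} {z : R}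
    (h : ∀ i j, A i j ≠ 0 → d i = z * d j) : diagonal d * A = z • (A * diagonal d) := by
  ext i j
  rw [diagonal_mul, Matrix.smul_apply, mul_diagonal, smul_eq_mul]
  by_cases hij : A i j = 0
  · simp only [hij, zero_mul, mul_zero]
  · rw [h i j hij]
    ring

theorem smul_one_mem_center_unitaryGroup [CommRing R] [StarRing R] {z : R}
    (hz : z • (1 : Matrix m m R) ∈ unitaryGroup m R) :
    (⟨z • 1, hz⟩ : unitaryGroup m R) ∈ Subgroup.center (unitaryGroup m R) :=
  Subgroup.mem_center_iff.2 fun g => Subtype.ext <| by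
    simp only [UnitaryGroup.mul_val, mul_smul_one, smul_one_mul]

end Matrix

theorem orderOf_smul_one {R A : Type*} [CommSemiring R] [Semiring A] [Algebra R A]
    [FaithfulSMul R A] (z : R) : orderOf (z • (1 : A)) = orderOf z := by
  rw [← Algebra.algebraMap_eq_smul_one]
  exact orderOf_injective (algebraMap R A).toMonoidHom (FaithfulSMul.algebraMap_injective R A) z

section Generators

open scoped commutatorElement

variable {n : ℕ}

theorem isPrimitiveRoot_zetaC (hn : n ≠ 0) : IsPrimitiveRoot (zetaC n) n :=
  Complex.isPrimitiveRoot_exp n hn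

theorem zetaC_pow_mod (k : ℕ) : zetaC n ^ (k % n) = zetaC n ^ k := by
  obtain rfl | hn := eq_or_ne n 0
  · rw [Nat.mod_zero]
  · exact (pow_eq_pow_mod k (isPrimitiveRoot_zetaC hn).pow_eq_one).symm

theorem betaM_mul_alphaM (n : ℕ) : betaM n * alphaM n = zetaC n • (alphaM n * betaM n) := by
  refine diagonal_mul_eq_smul_mul_diagonal fun i j hij => ?_
  have hi : (i : ℕ) = ((j : ℕ) + 1) % n := by
    by_contra h
    exact hij (if_neg h)
  rw [pow_succ', hi, zetaC_pow_mod]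

variable (hA : alphaM n ∈ unitaryGroup (Fin n) ℂ) (hB : betaM n ∈ unitaryGroup (Fin n) ℂ)
  (hS : zetaC n • (1 : Matrix (Fin n) (Fin n) ℂ) ∈ unitaryGroup (Fin n) ℂ)

theorem commute_sU (g : unitaryGroup (Fin n) ℂ) : Commute (sU n hS) g :=
  (Subgroup.mem_center_iff.1 (smul_one_mem_center_unitaryGroup hS) g).symm

theorem commutatorElement_bU_aU : ⁅bU n hB, aU n hA⁆ = sU n hS := by
  have hrel : bU n hB * aU n hA = sU n hS * (aU n hA * bU n hB) := Subtype.ext <| by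
    simp only [UnitaryGroup.mul_val, aU, bU, sU, betaM_mul_alphaM, smul_one_mul]
  rw [commutatorElement_def, hrel, ← mul_assoc, mul_inv_cancel_right, mul_inv_cancel_right]

theorem commutator_Vgrp_Vgrp : ⁅Vgrp n hA hB, Vgrp n hA hB⁆ = Subgroup.zpowers (sU n hS) := by
  have hcomm := commutatorElement_bU_aU hA hB hS
  have hcentral (g : unitaryGroup (Fin n) ℂ) : Commute ⁅bU n hB, aU n hA⁆ g :=
    hcomm ▸ commute_sU hS g
  rw [Vgrp, Set.pair_comm, ← hcomm]
  exact commutator_closure_pair (hcentral _) (hcentral _)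

theorem orderOf_sU (hn : n ≠ 0) : orderOf (sU n hS) = n := by
  have : NeZero n := ⟨hn⟩
  rw [← orderOf_submonoid, sU, orderOf_smul_one, ← (isPrimitiveRoot_zetaC hn).eq_orderOf]

end Generators

/-- the commutator subgroup of `V_n'` is the cyclic subgroup generated by the
scalar matrix `ζ·I`; in particular it is cyclic of order `n`. -/
theorem commutator_Vgrp_eq (n : ℕ) (hn : 1 < n)
    (hA : alphaM n ∈ Matrix.unitaryGroup (Fin n) ℂ)
    (hB : betaM n ∈ Matrix.unitaryGroup (Fin n) ℂ)
    (hS : zetaC n • (1 : Matrix (Fin n) (Fin n) ℂ) ∈ Matrix.unitaryGroup (Fin n) ℂ) :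
    ∃ hsV : sU n hS ∈ Vgrp n hA hB,
      commutator (Vgrp n hA hB) = Subgroup.zpowers (⟨sU n hS, hsV⟩ : Vgrp n hA hB) ∧
      orderOf (⟨sU n hS, hsV⟩ : Vgrp n hA hB) = n := by
  have hcomm : ⁅Vgrp n hA hB, Vgrp n hA hB⁆ = Subgroup.zpowers (sU n hS) :=
    commutator_Vgrp_Vgrp hA hB hS
  have hsV : sU n hS ∈ Vgrp n hA hB :=
    Subgroup.commutator_le_self _ (hcomm ▸ Subgroup.mem_zpowers _)
  refine ⟨hsV, ?_, ?_⟩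
  · apply Subgroup.map_injective (Vgrp n hA hB).subtype_injective
    rw [Subgroup.map_subtype_commutator, hcomm, MonoidHom.map_zpowers, Subgroup.subtype_apply]
  · rw [Subgroup.orderOf_mk, orderOf_sU hS (Nat.ne_zero_of_lt hn)]
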